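/- Let D ⊂ ℝ^d be a bounded measurable set such that the one-sided derivative γ̄_D′⁺(0) exists and is finite, and such that ρ^{d+1} γ̄̂_D(ρ) is bounded and measurable on (0,∞). Then lim_{R→∞} (1/R) ∫₀^R 2π² κ_{d−1} ρ^{d+1} γ̄̂_D(ρ) dρ = −γ̄_D′⁺(0). -/

import Mathlib

open MeasureTheory Metric Set Real Complex Filter
open scoped FourierTransform RealInnerProductSpace Pointwise ENNReal Topology

noncomputable section

/-- The Euclidean space `ℝ^d`. -/
abbrev E (d : ℕ) := EuclideanSpace ℝ (Fin d)

/-- View a plain vector `Fin d → ℝ` as a point of Euclidean space. -/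
def toE {d : ℕ} (v : Fin d → ℝ) : E d := (EuclideanSpace.equiv (Fin d) ℝ).symm v

/-- The point lattice `T = A ℤ^d`. -/
def latticeSet (d : ℕ) (A : Matrix (Fin d) (Fin d) ℝ) : Set (E d) :=
  {p | ∃ n : Fin d → ℤ, p = toE (A.mulVec fun i => (n i : ℝ))}

/-- The fundamental region `F_T = A [0,1)^d`. -/
def fundRegion (d : ℕ) (A : Matrix (Fin d) (Fin d) ℝ) : Set (E d) :=
  (fun y => toE (A.mulVec y)) '' (Set.pi Set.univ fun _ : Fin d => Set.Ico (0 : ℝ) 1)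

/-- Number of lattice points in the translate `D + x`. -/
def latticeCount (d : ℕ) (A : Matrix (Fin d) (Fin d) ℝ) (D : Set (E d)) (x : E d) : ℕ :=
  (((fun y => y + x) '' D) ∩ latticeSet d A).ncard

/-- The dual lattice `T* = {ξ | ξ·p ∈ ℤ for all p ∈ T}`. -/
def dualLattice (d : ℕ) (A : Matrix (Fin d) (Fin d) ℝ) : Set (E d) :=
  {ξ | ∀ p ∈ latticeSet d A, ∃ k : ℤ, ⟪ξ, p⟫ = (k : ℝ)}

/-- The (complex-valued) indicator function of a set. -/
def indC {d : ℕ} (D : Set (E d)) : E d → ℂ := D.indicator 1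

/-- The covariogram `γ_D(x) = ∫ I_D(y) I_D(y - x) dy`. -/
def covariogram {d : ℕ} (D : Set (E d)) (x : E d) : ℝ :=
  ∫ y, (D.indicator (1 : E d → ℝ) y) * (D.indicator (1 : E d → ℝ) (y - x))

/-- The normalized (probability) surface measure on the unit sphere `S^{d-1}`. -/
def sphereProb (d : ℕ) : Measure (sphere (0 : E d) 1) :=
  ((volume : Measure (E d)).toSphere Set.univ)⁻¹ • (volume : Measure (E d)).toSphere

/-- Rotational quadratic average of the modulus of the Fourier transform of `I_D`:
`γ̄̂_D(ρ) = ∫_{S^{d-1}} |Î_D(ρ ξ)|² dσ(ξ)`. -/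
def avgFT {d : ℕ} (D : Set (E d)) (ρ : ℝ) : ℝ :=
  ∫ ξ : sphere (0 : E d) 1, ‖𝓕 (indC D) (ρ • (ξ : E d))‖ ^ 2 ∂(sphereProb d)

/-- The isotropic covariogram, via its (equivalent) definition as the spherical average
`γ̄_D(u) = ∫_{S^{d-1}} γ_D(u ξ) dσ(ξ)`. -/
def isoCov {d : ℕ} (D : Set (E d)) (u : ℝ) : ℝ :=
  ∫ ξ : sphere (0 : E d) 1, covariogram D (u • (ξ : E d)) ∂(sphereProb d)

/-- Bessel function of the first kind (power series definition, real order). -/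
def besselJ (ν : ℝ) (z : ℝ) : ℝ :=
  ∑' k : ℕ, (-1 : ℝ) ^ k * (z / 2) ^ (ν + 2 * k) / (Nat.factorial k * Real.Gamma (ν + k + 1))

/-- `κ_d`, the volume of the unit ball in `ℝ^d`. -/
def unitBallVol (d : ℕ) : ℝ := Real.pi ^ ((d : ℝ) / 2) / Real.Gamma ((d : ℝ) / 2 + 1)

/-- The image of a set `D` under the rotation given by a matrix `M`. -/
def rotSet {d : ℕ} (M : Matrix (Fin d) (Fin d) ℝ) (D : Set (E d)) : Set (E d) :=
  (fun y => toE (M.mulVec (EuclideanSpace.equiv (Fin d) ℝ y))) '' D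

/-- The special orthogonal group `SO(d)`, as a set of matrices. -/
def SOSet (d : ℕ) : Set (Matrix (Fin d) (Fin d) ℝ) :=
  {M | M ∈ Matrix.specialOrthogonalGroup (Fin d) ℝ}

/-- Borel measurable structure on the space of `d × d` real matrices. -/
instance matrixMeasurableSpace {d : ℕ} : MeasurableSpace (Matrix (Fin d) (Fin d) ℝ) :=
  borel _

instance matrixBorelSpace {d : ℕ} : BorelSpace (Matrix (Fin d) (Fin d) ℝ) := ⟨rfl⟩

/-! ### Tauberian part -/

theorem tb_int_bdd (F : ℝ → ℝ) (hF : Measurable F) (C : ℝ) (hC : ∀ ρ, 0 < ρ → |F ρ| ≤ C)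
    (g : ℝ → ℝ) (hg : IntegrableOn g (Ioi 0)) (R : ℝ) (hR : 0 < R) :
    IntegrableOn (fun t => F (R * t) * g t) (Ioi 0) := by
  refine Integrable.bdd_mul (c := C) hg ?_ ?_
  · exact (hF.comp (measurable_const_mul R)).aestronglyMeasurable
  · filter_upwards [ae_restrict_mem measurableSet_Ioi] with t ht
    exact hC _ (mul_pos hR ht)

theorem tb_approx (F : ℝ → ℝ) (hF : Measurable F) (C : ℝ) (hC : ∀ ρ, 0 < ρ → |F ρ| ≤ C)
    {ι : Type*} (p : Filter ι) [NeBot p] (G : ι → ℝ → ℝ) (g : ℝ → ℝ)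
    (hG : ∀ᶠ i in p, IntegrableOn (G i) (Ioi 0)) (hg : IntegrableOn g (Ioi 0))
    (hGg : Tendsto (fun i => ∫ t in Ioi 0, |G i t - g t|) p (𝓝 0))
    (l : ι → ℝ) (l0 : ℝ)
    (hl : ∀ᶠ i in p, Tendsto (fun R => ∫ t in Ioi 0, F (R * t) * G i t) atTop (𝓝 (l i)))
    (hl0 : Tendsto l p (𝓝 l0)) :
    Tendsto (fun R => ∫ t in Ioi 0, F (R * t) * g t) atTop (𝓝 l0) := by
  have hC0 : 0 ≤ C := (abs_nonneg _).trans (hC 1 one_pos)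
  refine TendstoUniformlyOnFilter.tendsto_of_eventually_tendsto
    (F := fun i R => ∫ t in Ioi 0, F (R * t) * G i t) (p := p) (L := l) ?_ hl hl0
  rw [Metric.tendstoUniformlyOnFilter_iff]
  intro ε hε
  have h1 : ∀ᶠ i in p, C * ∫ t in Ioi 0, |G i t - g t| < ε := by
    have := hGg.const_mul C
    rw [mul_zero] at this
    exact this.eventually (gt_mem_nhds hε)
  filter_upwards [(hG.and h1).prod_mk (eventually_gt_atTop (0 : ℝ))] with ⟨i, R⟩ h
  obtain ⟨⟨hi, h2⟩, hR⟩ := h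
  simp only at hi h2 hR ⊢
  rw [dist_comm, Real.dist_eq, ← integral_sub (tb_int_bdd F hF C hC _ hi R hR)
    (tb_int_bdd F hF C hC _ hg R hR)]
  refine lt_of_le_of_lt ?_ h2
  rw [← integral_const_mul, ← Real.norm_eq_abs]
  refine norm_integral_le_of_norm_le (((hi.sub hg).abs).const_mul C) ?_
  filter_upwards [ae_restrict_mem measurableSet_Ioi] with t ht
  rw [← mul_sub, norm_mul]
  exact mul_le_mul_of_nonneg_right (hC _ (mul_pos hR ht)) (norm_nonneg _)

theorem tb_gauss_int (a : ℝ) (ha : 0 < a) :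
    IntegrableOn (fun t : ℝ => Real.exp (-a * t ^ 2)) (Ioi 0) :=
  (integrable_exp_neg_mul_sq ha).integrableOn

theorem tb_diff_bound (a b : ℝ) (hab : a < b) (t : ℝ) (ht : 0 < t) :
    Real.exp (-b * t ^ 2) ≤ (Real.exp (-a * t ^ 2) - Real.exp (-b * t ^ 2)) / t ^ 2 / (b - a) ∧
    (Real.exp (-a * t ^ 2) - Real.exp (-b * t ^ 2)) / t ^ 2 / (b - a) ≤ Real.exp (-a * t ^ 2) := by
  have hba : 0 < b - a := sub_pos.2 hab
  have ht2 : 0 < t ^ 2 := by positivity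
  rw [div_div, le_div_iff₀ (by positivity), div_le_iff₀ (by positivity)]
  set u := t ^ 2 * (b - a) with hu
  have e1 : Real.exp (-a * t ^ 2) = Real.exp (-b * t ^ 2) * Real.exp u := by
    rw [← Real.exp_add]; congr 1; rw [hu]; ring
  have e2 : Real.exp (-b * t ^ 2) = Real.exp (-a * t ^ 2) * Real.exp (-u) := by
    rw [← Real.exp_add]; congr 1; rw [hu]; ring
  constructor
  · rw [e1]
    nlinarith [Real.exp_pos (-b * t ^ 2), Real.add_one_le_exp u]
  · rw [e2]
    nlinarith [Real.exp_pos (-a * t ^ 2), Real.add_one_le_exp (-u)]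

theorem tb_diff_int (a b : ℝ) (ha : 0 < a) (hab : a < b) :
    IntegrableOn (fun t : ℝ => (Real.exp (-a * t ^ 2) - Real.exp (-b * t ^ 2)) / t ^ 2 / (b - a))
      (Ioi 0) := by
  refine Integrable.mono' (tb_gauss_int a ha) (Measurable.aestronglyMeasurable (by fun_prop)) ?_
  filter_upwards [ae_restrict_mem measurableSet_Ioi] with t ht
  obtain ⟨h1, h2⟩ := tb_diff_bound a b hab t ht
  rw [Real.norm_of_nonneg ((Real.exp_pos _).le.trans h1)]
  exact h2

theorem tb_exp (F : ℝ → ℝ) (hF : Measurable F) (C : ℝ) (hC : ∀ ρ, 0 < ρ → |F ρ| ≤ C) (c : ℝ)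
    (h : ∀ a b : ℝ, 0 < a → a < b → Tendsto (fun R => ∫ t in Ioi 0, F (R * t) *
      ((Real.exp (-a * t ^ 2) - Real.exp (-b * t ^ 2)) / t ^ 2)) atTop
      (𝓝 (c * (√π * (√b - √a))))) (a : ℝ) (ha : 0 < a) :
    Tendsto (fun R => ∫ t in Ioi 0, F (R * t) * Real.exp (-a * t ^ 2)) atTop
      (𝓝 (c * ∫ t in Ioi 0, Real.exp (-a * t ^ 2))) := by
  refine tb_approx F hF C hC (𝓝[>] a)
    (fun b t => (Real.exp (-a * t ^ 2) - Real.exp (-b * t ^ 2)) / t ^ 2 / (b - a)) _ ?_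
    (tb_gauss_int a ha) ?_ (fun b => c * (√π * ((√b - √a) / (b - a)))) _ ?_ ?_
  · filter_upwards [self_mem_nhdsWithin] with b hb
    exact tb_diff_int a b ha hb
  · have h0 : Tendsto (fun b : ℝ => √(π / a) / 2 - √(π / b) / 2) (𝓝[>] a) (𝓝 0) := by
      have : ContinuousAt (fun b : ℝ => √(π / a) / 2 - √(π / b) / 2) a := by
        have : ContinuousAt (fun b : ℝ => π / b) a := continuousAt_const.div continuousAt_id ha.ne'
        fun_prop
      have := this.tendsto
      rw [sub_self] at this
      exact this.mono_left nhdsWithin_le_nhds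
    refine squeeze_zero' (Eventually.of_forall fun b => integral_nonneg fun t => abs_nonneg _) ?_ h0
    filter_upwards [self_mem_nhdsWithin] with b hb
    have hb' : a < b := hb
    rw [← integral_gaussian_Ioi, ← integral_gaussian_Ioi,
      ← integral_sub (tb_gauss_int a ha) (tb_gauss_int b (ha.trans hb'))]
    refine setIntegral_mono_on ((tb_diff_int a b ha hb).sub (tb_gauss_int a ha)).abs
      ((tb_gauss_int a ha).sub (tb_gauss_int b (ha.trans hb'))) measurableSet_Ioi fun t ht => ?_
    obtain ⟨h1, h2⟩ := tb_diff_bound a b hb t ht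
    rw [abs_le]
    constructor <;> linarith
  · filter_upwards [self_mem_nhdsWithin] with b hb
    have := (h a b ha hb).div_const (b - a)
    convert this using 1
    · ext R
      rw [← integral_div]
      congr 1; ext t; ring
    · congr 1; ring
  · have : HasDerivAt (fun x => √x) (1 / (2 * √a)) a := Real.hasDerivAt_sqrt ha.ne'
    have h2 := hasDerivAt_iff_tendsto_slope.1 this
    have h3 : Tendsto (fun b => (√b - √a) / (b - a)) (𝓝[>] a) (𝓝 (1 / (2 * √a))) := by
      refine (h2.mono_left (nhdsWithin_mono _ fun x hx => (ne_of_gt hx))).congr fun b => ?_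
      rw [slope_def_field]
    have h4 := (h3.const_mul √π).const_mul c
    convert h4 using 2
    rw [integral_gaussian_Ioi, Real.sqrt_div Real.pi_pos.le]
    field_simp

theorem tb_poly (F : ℝ → ℝ) (hF : Measurable F) (C : ℝ) (hC : ∀ ρ, 0 < ρ → |F ρ| ≤ C) (c : ℝ)
    (h : ∀ a : ℝ, 0 < a → Tendsto (fun R => ∫ t in Ioi 0, F (R * t) * Real.exp (-a * t ^ 2)) atTop
      (𝓝 (c * ∫ t in Ioi 0, Real.exp (-a * t ^ 2)))) (P : Polynomial ℝ) :
    IntegrableOn (fun t : ℝ => P.eval (Real.exp (-t ^ 2)) * Real.exp (-t ^ 2)) (Ioi 0) ∧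
    Tendsto (fun R => ∫ t in Ioi 0, F (R * t) * (P.eval (Real.exp (-t ^ 2)) * Real.exp (-t ^ 2)))
      atTop (𝓝 (c * ∫ t in Ioi 0, P.eval (Real.exp (-t ^ 2)) * Real.exp (-t ^ 2))) := by
  induction P using Polynomial.induction_on' with
  | add p q hp hq =>
    obtain ⟨hp1, hp2⟩ := hp
    obtain ⟨hq1, hq2⟩ := hq
    simp only [Polynomial.eval_add, add_mul]
    refine ⟨hp1.add hq1, ?_⟩
    rw [integral_add hp1 hq1, mul_add]
    refine (hp2.add hq2).congr' ?_
    filter_upwards [eventually_gt_atTop 0] with R hR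
    rw [← integral_add (tb_int_bdd F hF C hC _ hp1 R hR) (tb_int_bdd F hF C hC _ hq1 R hR)]
    simp only [mul_add]
  | monomial n x =>
    have e : ∀ t : ℝ, (Polynomial.monomial n x).eval (Real.exp (-t ^ 2)) * Real.exp (-t ^ 2)
        = x * Real.exp (-((n : ℝ) + 1) * t ^ 2) := by
      intro t
      rw [Polynomial.eval_monomial, mul_assoc, ← pow_succ, ← Real.exp_nat_mul]
      congr 2; push_cast; ring
    have hn : (0 : ℝ) < n + 1 := by positivity
    simp only [e]
    refine ⟨(tb_gauss_int _ hn).const_mul x, ?_⟩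
    have := (h _ hn).const_mul x
    convert this using 1
    · ext R
      rw [← integral_const_mul]; congr 1; ext t; ring
    · rw [integral_const_mul]; congr 1; ring

theorem tb_cont_int (f : ℝ → ℝ) (hf : Continuous f) :
    IntegrableOn (fun t : ℝ => f (Real.exp (-t ^ 2)) * Real.exp (-t ^ 2)) (Ioi 0) := by
  obtain ⟨M, hM⟩ := (isCompact_Icc (a := (0:ℝ)) (b := 1)).exists_bound_of_continuousOn hf.continuousOn
  have hg := tb_gauss_int 1 one_pos
  simp only [neg_mul, one_mul] at hg
  refine Integrable.bdd_mul (c := M) hg (by fun_prop) (Eventually.of_forall fun t => ?_)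
  exact hM _ ⟨(Real.exp_pos _).le, Real.exp_le_one_iff.2 (by nlinarith [sq_nonneg t])⟩

theorem tb_cont (F : ℝ → ℝ) (hF : Measurable F) (C : ℝ) (hC : ∀ ρ, 0 < ρ → |F ρ| ≤ C) (c : ℝ)
    (h : ∀ a : ℝ, 0 < a → Tendsto (fun R => ∫ t in Ioi 0, F (R * t) * Real.exp (-a * t ^ 2)) atTop
      (𝓝 (c * ∫ t in Ioi 0, Real.exp (-a * t ^ 2)))) (f : ℝ → ℝ) (hf : Continuous f) :
    Tendsto (fun R => ∫ t in Ioi 0, F (R * t) * (f (Real.exp (-t ^ 2)) * Real.exp (-t ^ 2)))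
      atTop (𝓝 (c * ∫ t in Ioi 0, f (Real.exp (-t ^ 2)) * Real.exp (-t ^ 2))) := by
  have hP : ∀ n : ℕ, ∃ p : Polynomial ℝ, ∀ x ∈ Icc (0:ℝ) 1, |p.eval x - f x| < 1 / ((n : ℝ) + 1) :=
    fun n => exists_polynomial_near_of_continuousOn 0 1 f hf.continuousOn _ (by positivity)
  choose P hP using hP
  have hg := tb_gauss_int 1 one_pos
  simp only [neg_mul, one_mul] at hg
  have hPi := fun n => (tb_poly F hF C hC c h (P n)).1
  have key : Tendsto (fun n => ∫ t in Ioi (0:ℝ), |(P n).eval (Real.exp (-t ^ 2)) * Real.exp (-t ^ 2)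
      - f (Real.exp (-t ^ 2)) * Real.exp (-t ^ 2)|) atTop (𝓝 0) := by
    have h0 := (tendsto_one_div_add_atTop_nhds_zero_nat (𝕜 := ℝ)).mul_const
      (∫ t in Ioi (0:ℝ), Real.exp (-t ^ 2))
    rw [zero_mul] at h0
    refine squeeze_zero (fun n => integral_nonneg fun t => abs_nonneg _) (fun n => ?_) h0
    rw [← integral_const_mul]
    refine integral_mono ((hPi n).sub (tb_cont_int f hf)).abs (hg.const_mul _) fun t => ?_
    simp only
    rw [← sub_mul, abs_mul, Real.abs_exp]
    refine mul_le_mul_of_nonneg_right (hP n _ ?_).le (Real.exp_pos _).le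
    exact ⟨(Real.exp_pos _).le, Real.exp_le_one_iff.2 (by nlinarith [sq_nonneg t])⟩
  refine tb_approx F hF C hC atTop _ _ (Eventually.of_forall hPi) (tb_cont_int f hf) key _ _
    (Eventually.of_forall fun n => (tb_poly F hF C hC c h (P n)).2) ?_
  refine Tendsto.const_mul c ?_
  rw [tendsto_iff_norm_sub_tendsto_zero]
  refine squeeze_zero (fun n => norm_nonneg _) (fun n => ?_) key
  rw [← integral_sub (hPi n) (tb_cont_int f hf)]
  exact norm_integral_le_integral_norm _

/-- continuous approximations of `1_{x ≥ 1/e} / x`. -/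
def tbf (n : ℕ) (x : ℝ) : ℝ :=
  min 1 (max 0 (n * (x - Real.exp (-1)) + 1)) * (max x (Real.exp (-1)))⁻¹

theorem tbf_cont (n : ℕ) : Continuous (tbf n) := by
  unfold tbf
  refine Continuous.mul (by fun_prop) (Continuous.inv₀ (by fun_prop) fun x => ?_)
  exact (lt_of_lt_of_le (Real.exp_pos _) (le_max_right _ _)).ne'

theorem tbf_bound (n : ℕ) (x : ℝ) : |tbf n x| ≤ Real.exp 1 := by
  unfold tbf
  have h1 : 0 < max x (Real.exp (-1)) := lt_of_lt_of_le (Real.exp_pos _) (le_max_right _ _)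
  rw [abs_mul, abs_of_nonneg (le_min zero_le_one (le_max_left _ _)), abs_of_nonneg (by positivity)]
  calc _ ≤ 1 * (Real.exp (-1))⁻¹ := by
        gcongr
        · exact min_le_left _ _
        · exact le_max_right _ _
    _ = Real.exp 1 := by rw [one_mul, Real.exp_neg, inv_inv]

theorem tbf_lim (t : ℝ) (ht : 0 < t) :
    Tendsto (fun n => tbf n (Real.exp (-t ^ 2)) * Real.exp (-t ^ 2)) atTop
      (𝓝 ((Ioc (0:ℝ) 1).indicator 1 t)) := by
  by_cases h : t ≤ 1
  · have hx : Real.exp (-1) ≤ Real.exp (-t ^ 2) := Real.exp_le_exp.2 (by nlinarith)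
    have : ∀ n : ℕ, tbf n (Real.exp (-t ^ 2)) * Real.exp (-t ^ 2) = 1 := by
      intro n
      unfold tbf
      have h3 : 0 ≤ (n : ℝ) * (Real.exp (-t ^ 2) - Real.exp (-1)) :=
        mul_nonneg (Nat.cast_nonneg _) (sub_nonneg.2 hx)
      rw [max_eq_left hx, max_eq_right (by linarith), min_eq_left (by linarith), one_mul,
        inv_mul_cancel₀ (Real.exp_pos _).ne']
    simp only [this]
    rw [indicator_of_mem (show t ∈ Ioc (0:ℝ) 1 from ⟨ht, h⟩)]
    exact tendsto_const_nhds
  · push Not at h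
    have hx : Real.exp (-t ^ 2) < Real.exp (-1) := Real.exp_lt_exp.2 (by nlinarith)
    rw [indicator_of_notMem (fun h' : t ∈ Ioc (0:ℝ) 1 => absurd h'.2 (not_le.2 h))]
    refine tendsto_const_nhds.congr' ?_
    obtain ⟨N, hN⟩ := exists_nat_gt (1 / (Real.exp (-1) - Real.exp (-t ^ 2)))
    filter_upwards [eventually_ge_atTop N] with n hn
    have hn' : (N : ℝ) ≤ n := by exact_mod_cast hn
    have h4 : 0 < Real.exp (-1) - Real.exp (-t ^ 2) := sub_pos.2 hx
    have h5 : 1 < n * (Real.exp (-1) - Real.exp (-t ^ 2)) := by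
      rw [div_lt_iff₀ h4] at hN
      nlinarith
    unfold tbf
    rw [max_eq_left (by nlinarith), min_eq_right zero_le_one]
    ring

theorem tb_main (F : ℝ → ℝ) (hF : Measurable F) (C : ℝ) (hC : ∀ ρ, 0 < ρ → |F ρ| ≤ C) (c : ℝ)
    (h : ∀ a b : ℝ, 0 < a → a < b → Tendsto (fun R => ∫ t in Ioi 0, F (R * t) *
      ((Real.exp (-a * t ^ 2) - Real.exp (-b * t ^ 2)) / t ^ 2)) atTop
      (𝓝 (c * (√π * (√b - √a))))) :
    Tendsto (fun R => R⁻¹ * ∫ ρ in Ioc (0:ℝ) R, F ρ) atTop (𝓝 c) := by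
  have hexp := tb_exp F hF C hC c h
  have hg := tb_gauss_int 1 one_pos
  simp only [neg_mul, one_mul] at hg
  have hind : IntegrableOn ((Ioc (0:ℝ) 1).indicator (1 : ℝ → ℝ)) (Ioi 0) := by
    refine Integrable.integrableOn ?_
    rw [integrable_indicator_iff measurableSet_Ioc]
    exact integrableOn_const (by simp)
  have hfi := fun n => tb_cont_int (tbf n) (tbf_cont n)
  have key : Tendsto (fun n => ∫ t in Ioi (0:ℝ), |tbf n (Real.exp (-t ^ 2)) * Real.exp (-t ^ 2)
      - (Ioc (0:ℝ) 1).indicator 1 t|) atTop (𝓝 0) := by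
    have := tendsto_integral_of_dominated_convergence (μ := volume.restrict (Ioi (0:ℝ)))
      (F := fun n t => |tbf n (Real.exp (-t ^ 2)) * Real.exp (-t ^ 2)
        - (Ioc (0:ℝ) 1).indicator 1 t|) (f := fun _ => 0)
      (fun t => Real.exp 1 * Real.exp (-t ^ 2) + |(Ioc (0:ℝ) 1).indicator (1 : ℝ → ℝ) t|)
      (fun n => ((hfi n).sub hind).abs.aestronglyMeasurable)
      ((hg.const_mul _).add hind.abs) ?_ ?_
    · simpa using this
    · intro n
      refine Eventually.of_forall fun t => ?_
      rw [Real.norm_eq_abs, abs_abs]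
      refine (abs_sub _ _).trans ?_
      rw [abs_mul, Real.abs_exp]
      gcongr
      exact tbf_bound _ _
    · filter_upwards [ae_restrict_mem measurableSet_Ioi] with t ht
      have := (tbf_lim t ht).sub_const ((Ioc (0:ℝ) 1).indicator 1 t)
      rw [sub_self] at this
      simpa using this.abs
  have hone : ∫ t in Ioi (0:ℝ), (Ioc (0:ℝ) 1).indicator (1 : ℝ → ℝ) t = 1 := by
    rw [setIntegral_indicator measurableSet_Ioc]
    have : Ioi (0:ℝ) ∩ Ioc 0 1 = Ioc 0 1 := by
      ext x; simp only [mem_inter_iff, mem_Ioi, mem_Ioc]; tauto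
    rw [this]; simp
  have main := tb_approx F hF C hC atTop _ _ (Eventually.of_forall hfi) hind key _ (c * 1)
    (Eventually.of_forall fun n => tb_cont F hF C hC c hexp (tbf n) (tbf_cont n)) (by
      refine Tendsto.const_mul c ?_
      rw [← hone, tendsto_iff_norm_sub_tendsto_zero]
      refine squeeze_zero (fun n => norm_nonneg _) (fun n => ?_) key
      rw [← integral_sub (hfi n) hind]
      exact norm_integral_le_integral_norm _)
  rw [mul_one] at main
  refine main.congr' ?_
  filter_upwards [eventually_gt_atTop 0] with R hR
  have e : ∀ t, F (R * t) * (Ioc (0:ℝ) 1).indicator 1 t = (Ioc (0:ℝ) 1).indicator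
      (fun t => F (R * t)) t := by
    intro t
    by_cases ht : t ∈ Ioc (0:ℝ) 1 <;> simp [ht]
  simp only [e]
  rw [setIntegral_indicator measurableSet_Ioc]
  have : Ioi (0:ℝ) ∩ Ioc 0 1 = Ioc 0 1 := by
    ext x; simp only [mem_inter_iff, mem_Ioi, mem_Ioc]; tauto
  rw [this, ← intervalIntegral.integral_of_le zero_le_one,
    intervalIntegral.integral_comp_mul_left _ hR.ne', ← intervalIntegral.integral_of_le hR.le]
  simp

/-! ### Polar coordinates -/

/-- total surface measure of the sphere -/
def sphS (d : ℕ) : ℝ := ((volume : Measure (E d)).toSphere Set.univ).toReal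

theorem sphS_pos (d : ℕ) (hd : 1 ≤ d) : 0 < sphS d := by
  unfold sphS
  refine ENNReal.toReal_pos ?_ (measure_ne_top _ _)
  rw [Measure.toSphere_apply_univ]
  have : (volume : Measure (E d)) (ball 0 1) ≠ 0 := (measure_ball_pos _ _ one_pos).ne'
  simp only [finrank_euclideanSpace, Fintype.card_fin, ne_eq, mul_eq_zero, Nat.cast_eq_zero,
    not_or]
  exact ⟨by omega, this⟩

theorem sphereProb_isProb (d : ℕ) (hd : 1 ≤ d) : IsProbabilityMeasure (sphereProb d) := by
  constructor
  unfold sphereProb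
  rw [Measure.smul_apply, smul_eq_mul]
  refine ENNReal.inv_mul_cancel ?_ (measure_ne_top _ _)
  intro h
  have := sphS_pos d hd
  unfold sphS at this
  rw [h] at this
  simp at this

theorem polar_aux (d : ℕ) (hd : 1 ≤ d) (f : E d → ℝ) (hf : Integrable f) :
    IntegrableOn (fun r : ℝ => r ^ (d - 1) * ∫ ξ : sphere (0 : E d) 1, f (r • (ξ : E d)) ∂(sphereProb d))
      (Ioi 0) ∧
    ∫ x, f x = sphS d * ∫ r in Ioi (0:ℝ),
      r ^ (d - 1) * ∫ ξ : sphere (0 : E d) 1, f (r • (ξ : E d)) ∂(sphereProb d) := by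
  have hS := sphS_pos d hd
  have hnt : Nontrivial (E d) := by
    have : Nonempty (Fin d) := ⟨⟨0, hd⟩⟩
    infer_instance
  set T := (volume : Measure (E d)).toSphere with hT
  set g : sphere (0 : E d) 1 × Ioi (0:ℝ) → ℝ := fun p => f (p.2.1 • p.1.1) with hg
  have hfin : Module.finrank ℝ (E d) = d := by simp
  have mp := (volume : Measure (E d)).measurePreserving_homeomorphUnitSphereProd
  rw [hfin] at mp
  have hge : ∀ y : ({0}ᶜ : Set (E d)), g (homeomorphUnitSphereProd (E d) y) = f y.1 := by
    intro y
    simp only [hg]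
    congr 1
    have : ‖(y : E d)‖ ≠ 0 := norm_ne_zero_iff.2 y.2
    simp [smul_smul, this]
  have emb := (homeomorphUnitSphereProd (E d)).measurableEmbedding
  have hgi : Integrable g (T.prod (Measure.volumeIoiPow (d - 1))) := by
    rw [← mp.integrable_comp_emb emb]
    have : (g ∘ (homeomorphUnitSphereProd (E d))) = f ∘ Subtype.val := funext hge
    rw [this, ← integrableOn_iff_comap_subtypeVal (measurableSet_singleton _).compl]
    exact hf.integrableOn
  have hint : ∫ x, f x = ∫ p, g p ∂(T.prod (Measure.volumeIoiPow (d - 1))) := by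
    rw [← mp.integral_comp emb]
    simp only [hge]
    rw [integral_subtype_comap (measurableSet_singleton _).compl fun x => f x,
      restrict_compl_singleton]
  have hsp : ∀ r : ℝ, ∫ ξ : sphere (0 : E d) 1, f (r • (ξ : E d)) ∂T
      = sphS d * ∫ ξ : sphere (0 : E d) 1, f (r • (ξ : E d)) ∂(sphereProb d) := by
    intro r
    unfold sphereProb
    rw [integral_smul_measure, ENNReal.toReal_inv, smul_eq_mul, ← mul_assoc]
    change _ = sphS d * (sphS d)⁻¹ * _
    rw [mul_inv_cancel₀ hS.ne', one_mul]
  have hmeas : Measurable fun r : Ioi (0:ℝ) => ENNReal.ofReal (r.1 ^ (d - 1)) := by fun_prop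
  have h1 := hgi.integral_prod_right
  simp only [hg, hsp] at h1
  rw [Measure.volumeIoiPow, integrable_withDensity_iff_integrable_smul' hmeas (by simp)] at h1
  constructor
  · have h2 := h1.const_mul (sphS d)⁻¹
    rw [integrableOn_iff_comap_subtypeVal measurableSet_Ioi]
    refine h2.congr (Eventually.of_forall fun r => ?_)
    have hr : 0 < r.1 := r.2
    simp only [Function.comp, smul_eq_mul]
    rw [ENNReal.toReal_ofReal (by positivity)]
    field_simp
  · rw [hint, integral_prod_symm _ hgi, Measure.volumeIoiPow,
      integral_withDensity_eq_integral_toReal_smul hmeas (by simp), ← integral_const_mul,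
      ← integral_subtype_comap measurableSet_Ioi (fun r => sphS d * (r ^ (d - 1) *
        ∫ ξ : sphere (0 : E d) 1, f (r • (ξ : E d)) ∂(sphereProb d)))]
    refine integral_congr_ae (Eventually.of_forall fun r => ?_)
    have hr : 0 < r.1 := r.2
    simp only [hg, hsp, smul_eq_mul]
    rw [ENNReal.toReal_ofReal (by positivity)]
    ring

/-! ### Fourier part -/

theorem indC_integrable {d : ℕ} (D : Set (E d)) (hD : MeasurableSet D) (hb : Bornology.IsBounded D) :
    Integrable (indC D) := by
  unfold indC
  rw [integrable_indicator_iff hD]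
  exact integrableOn_const hb.measure_lt_top.ne

theorem indC_fourier_cont {d : ℕ} (D : Set (E d)) (hD : MeasurableSet D)
    (hb : Bornology.IsBounded D) : Continuous (𝓕 (indC D)) :=
  VectorFourier.fourierIntegral_continuous Real.continuous_fourierChar
    (by exact continuous_inner) (indC_integrable D hD hb)

theorem indC_fourier_bound {d : ℕ} (D : Set (E d)) (ξ : E d) :
    ‖𝓕 (indC D) ξ‖ ≤ ∫ x, ‖indC D x‖ :=
  VectorFourier.norm_fourierIntegral_le_integral_norm _ _ _ _ _

theorem cov_conv {d : ℕ} (D : Set (E d)) :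
    (fun x => (covariogram D x : ℂ)) = convolution (indC D) (fun z => indC D (-z))
      (ContinuousLinearMap.mul ℂ ℂ) volume := by
  ext x
  rw [convolution_def]
  unfold covariogram
  rw [← integral_complex_ofReal]
  congr 1
  ext y
  simp only [ContinuousLinearMap.mul_apply', neg_sub, indC, Complex.ofReal_mul]
  by_cases h1 : y ∈ D <;> by_cases h2 : y - x ∈ D <;> simp [h1, h2]

theorem cov_integrableC {d : ℕ} (D : Set (E d)) (hD : MeasurableSet D)
    (hb : Bornology.IsBounded D) : Integrable (fun x => (covariogram D x : ℂ)) := by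
  rw [cov_conv]
  exact (indC_integrable D hD hb).integrable_convolution _ (indC_integrable D hD hb).comp_neg

theorem cov_fourier {d : ℕ} (D : Set (E d)) (hD : MeasurableSet D)
    (hb : Bornology.IsBounded D) (ξ : E d) :
    𝓕 (fun x => (covariogram D x : ℂ)) ξ = ((‖𝓕 (indC D) ξ‖ ^ 2 : ℝ) : ℂ) := by
  rw [cov_conv, Real.fourier_mul_convolution_eq (indC_integrable D hD hb)
    (indC_integrable D hD hb).comp_neg]
  have : 𝓕 (fun z => indC D (-z)) ξ = (starRingEnd ℂ) (𝓕 (indC D) ξ) := by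
    rw [Real.fourier_eq', Real.fourier_eq', ← integral_conj,
      ← integral_neg_eq_self (μ := (volume : Measure (E d)))]
    congr 1
    ext v
    simp only [neg_neg, smul_eq_mul, map_mul, ← Complex.exp_conj]
    congr 1
    · congr 1
      simp only [inner_neg_left, map_mul, Complex.conj_ofReal, Complex.conj_I]
      push_cast
      ring
    · unfold indC
      by_cases h : v ∈ D <;> simp [h]
  rw [this, Complex.mul_conj, Complex.normSq_eq_norm_sq]

theorem gauss_integrable (d : ℕ) (b : ℝ) (hb : 0 < b) :
    Integrable (fun v : E d => cexp (-(b : ℂ) * (‖v‖ : ℂ) ^ 2)) := by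
  have := GaussianFourier.integrable_cexp_neg_mul_sq_norm_add (V := E d) (b := (b : ℂ))
    (by simpa using hb) 0 0
  simpa using this

theorem gauss_integrableR (d : ℕ) (b : ℝ) (hb : 0 < b) :
    Integrable (fun v : E d => Real.exp (-b * ‖v‖ ^ 2)) := by
  have := (gauss_integrable d b hb).norm
  refine this.congr (Eventually.of_forall fun v => ?_)
  simp only [Complex.norm_exp]
  congr 1
  rw [← Complex.ofReal_neg, ← Complex.ofReal_pow, ← Complex.ofReal_mul, Complex.ofReal_re]

theorem gauss_pairing (d : ℕ) (D : Set (E d)) (hD : MeasurableSet D)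
    (hb : Bornology.IsBounded D) (b : ℝ) (hb0 : 0 < b) :
    ∫ ξ, ‖𝓕 (indC D) ξ‖ ^ 2 * Real.exp (-b * ‖ξ‖ ^ 2) =
    ∫ x, covariogram D x * ((π / b) ^ ((d : ℝ) / 2) * Real.exp (-π ^ 2 * ‖x‖ ^ 2 / b)) := by
  have h := VectorFourier.integral_fourierIntegral_smul_eq_flip (L := innerₗ (E d))
    Real.continuous_fourierChar (by exact continuous_inner) (cov_integrableC D hD hb)
    (gauss_integrable d b hb0) 
  rw [flip_innerₗ] at h
  change ∫ ξ, 𝓕 (fun x => (covariogram D x : ℂ)) ξ • _ =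
    ∫ x, _ • 𝓕 (fun v : E d => cexp (-(b : ℂ) * (‖v‖ : ℂ) ^ 2)) x at h
  have hg := fourier_gaussian_innerProductSpace (V := E d) (b := (b : ℂ)) (by simpa using hb0)
  simp only [cov_fourier D hD hb, hg, smul_eq_mul] at h
  apply Complex.ofReal_injective
  rw [← integral_complex_ofReal, ← integral_complex_ofReal]
  refine Eq.trans (integral_congr_ae (Eventually.of_forall fun ξ => ?_))
    (h.trans (integral_congr_ae (Eventually.of_forall fun x => ?_)))
  · simp only
    push_cast
    rfl
  · have : (0:ℝ) ≤ π / b := by positivity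
    simp only
    push_cast [Complex.ofReal_cpow this]
    simp

theorem cov_bound {d : ℕ} (D : Set (E d)) (hD : MeasurableSet D)
    (hb : Bornology.IsBounded D) (x : E d) : |covariogram D x| ≤ volume.real D := by
  unfold covariogram
  have hi : Integrable (D.indicator (1 : E d → ℝ)) := by
    rw [integrable_indicator_iff hD]
    exact integrableOn_const hb.measure_lt_top.ne
  have : ∫ y, D.indicator (1 : E d → ℝ) y = volume.real D := by
    rw [integral_indicator_one hD]
  rw [← this, ← Real.norm_eq_abs]
  refine norm_integral_le_of_norm_le hi (Eventually.of_forall fun y => ?_)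
  by_cases h1 : y ∈ D <;> by_cases h2 : y - x ∈ D <;> simp [h1, h2]

theorem isoCov_bound {d : ℕ} (hd : 1 ≤ d) (D : Set (E d)) (hD : MeasurableSet D)
    (hb : Bornology.IsBounded D) (u : ℝ) : |isoCov D u| ≤ volume.real D := by
  have := sphereProb_isProb d hd
  unfold isoCov
  have h := norm_integral_le_of_norm_le_const (μ := sphereProb d) (C := volume.real D)
    (f := fun ξ : sphere (0 : E d) 1 => covariogram D (u • (ξ : E d)))
    (Eventually.of_forall fun ξ => cov_bound D hD hb _)
  simpa using h

theorem avgFT_cont {d : ℕ} (hd : 1 ≤ d) (D : Set (E d)) (hD : MeasurableSet D)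
    (hb : Bornology.IsBounded D) : Continuous (avgFT D) := by
  have := sphereProb_isProb d hd
  have hc := indC_fourier_cont D hD hb
  unfold avgFT
  refine continuous_of_dominated (bound := fun _ => (∫ x, ‖indC D x‖) ^ 2) ?_ ?_
    (integrable_const _) ?_
  · intro ρ
    refine Continuous.aestronglyMeasurable ?_
    fun_prop
  · intro ρ
    refine Eventually.of_forall fun ξ => ?_
    rw [Real.norm_of_nonneg (by positivity)]
    gcongr
    exact indC_fourier_bound D _
  · refine Eventually.of_forall fun ξ => ?_
    fun_prop

/-- The key identity after polar coordinates. -/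
theorem key_identity (d : ℕ) (hd : 1 ≤ d) (D : Set (E d)) (hD : MeasurableSet D)
    (hb : Bornology.IsBounded D) (b : ℝ) (hb0 : 0 < b) :
    IntegrableOn (fun ρ : ℝ => ρ ^ (d - 1) * (avgFT D ρ * Real.exp (-b * ρ ^ 2))) (Ioi 0) ∧
    IntegrableOn (fun s : ℝ => s ^ (d - 1) * (isoCov D (√b * s) *
      (π ^ ((d : ℝ) / 2) * Real.exp (-π ^ 2 * s ^ 2)))) (Ioi 0) ∧
    ∫ ρ in Ioi (0:ℝ), ρ ^ (d - 1) * (avgFT D ρ * Real.exp (-b * ρ ^ 2)) =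
    ∫ s in Ioi (0:ℝ), s ^ (d - 1) * (isoCov D (√b * s) *
      (π ^ ((d : ℝ) / 2) * Real.exp (-π ^ 2 * s ^ 2))) := by
  have hi1 : Integrable fun ξ : E d => ‖𝓕 (indC D) ξ‖ ^ 2 * Real.exp (-b * ‖ξ‖ ^ 2) := by
    refine Integrable.bdd_mul (c := (∫ x, ‖indC D x‖) ^ 2) (gauss_integrableR d b hb0) ?_ ?_
    · have hc := indC_fourier_cont D hD hb
      exact Continuous.aestronglyMeasurable (by fun_prop)
    · refine Eventually.of_forall fun ξ => ?_
      rw [Real.norm_of_nonneg (by positivity)]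
      gcongr
      exact indC_fourier_bound D _
  have hi2 : Integrable fun x : E d => covariogram D x *
      ((π / b) ^ ((d : ℝ) / 2) * Real.exp (-π ^ 2 * ‖x‖ ^ 2 / b)) := by
    have hcov : Integrable (covariogram D) := by
      have := (cov_integrableC D hD hb).re
      simpa using this
    refine Integrable.mul_bdd (c := (π / b) ^ ((d : ℝ) / 2)) hcov ?_ ?_
    · exact Continuous.aestronglyMeasurable (by fun_prop)
    · refine Eventually.of_forall fun x => ?_
      rw [Real.norm_of_nonneg (by positivity)]
      refine mul_le_of_le_one_right (by positivity) (Real.exp_le_one_iff.2 ?_)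
      rw [neg_mul, neg_div]
      exact neg_nonpos.2 (by positivity)
  obtain ⟨p1, q1⟩ := polar_aux d hd _ hi1
  obtain ⟨p2, q2⟩ := polar_aux d hd _ hi2
  have e1 : ∀ ρ ∈ Ioi (0:ℝ), ρ ^ (d - 1) * ∫ ξ : sphere (0 : E d) 1,
      ‖𝓕 (indC D) (ρ • (ξ : E d))‖ ^ 2 * Real.exp (-b * ‖ρ • (ξ : E d)‖ ^ 2) ∂(sphereProb d) =
      ρ ^ (d - 1) * (avgFT D ρ * Real.exp (-b * ρ ^ 2)) := by
    intro ρ hρ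
    have : ∀ ξ : sphere (0 : E d) 1, ‖ρ • (ξ : E d)‖ = ρ := fun ξ => by
      rw [norm_smul, Real.norm_of_nonneg (le_of_lt hρ)]; simp
    simp only [this]
    rw [integral_mul_const]
    rfl
  set H : ℝ → ℝ := fun r => r ^ (d - 1) * (isoCov D r *
      ((π / b) ^ ((d : ℝ) / 2) * Real.exp (-π ^ 2 * r ^ 2 / b))) with hH
  have e2 : ∀ r ∈ Ioi (0:ℝ), r ^ (d - 1) * ∫ ξ : sphere (0 : E d) 1,
      covariogram D (r • (ξ : E d)) * ((π / b) ^ ((d : ℝ) / 2) *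
        Real.exp (-π ^ 2 * ‖r • (ξ : E d)‖ ^ 2 / b)) ∂(sphereProb d) = H r := by
    intro r hr
    have : ∀ ξ : sphere (0 : E d) 1, ‖r • (ξ : E d)‖ = r := fun ξ => by
      rw [norm_smul, Real.norm_of_nonneg (le_of_lt hr)]; simp
    simp only [this]
    rw [integral_mul_const]
    rfl
  have p1' := p1.congr_fun e1 measurableSet_Ioi
  have p2' := p2.congr_fun e2 measurableSet_Ioi
  rw [setIntegral_congr_fun measurableSet_Ioi e1] at q1
  rw [setIntegral_congr_fun measurableSet_Ioi e2] at q2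
  have hsb : 0 < √b := Real.sqrt_pos.2 hb0
  have e3 : ∀ s : ℝ, √b * H (√b * s) = s ^ (d - 1) * (isoCov D (√b * s) *
      (π ^ ((d : ℝ) / 2) * Real.exp (-π ^ 2 * s ^ 2))) := by
    intro s
    simp only [hH]
    have h1 : -π ^ 2 * (√b * s) ^ 2 / b = -π ^ 2 * s ^ 2 := by
      rw [mul_pow, Real.sq_sqrt hb0.le]; field_simp
    have h2 : (π / b) ^ ((d : ℝ) / 2) * (√b * √b ^ (d - 1)) = π ^ ((d : ℝ) / 2) := by
      rw [← pow_succ', Nat.sub_add_cancel hd, Real.div_rpow Real.pi_pos.le hb0.le,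
        Real.sqrt_eq_rpow, ← Real.rpow_natCast, ← Real.rpow_mul hb0.le,
        show (1 / 2 * (d : ℝ)) = (d : ℝ) / 2 by ring]
      have : b ^ ((d : ℝ) / 2) ≠ 0 := (Real.rpow_pos_of_pos hb0 _).ne'
      field_simp
    rw [h1, mul_pow, ← h2]
    ring
  refine ⟨p1', ?_, ?_⟩
  · have : IntegrableOn (fun s => H (√b * s)) (Ioi 0) := by
      rw [integrableOn_Ioi_comp_mul_left_iff H 0 hsb, mul_zero]
      exact p2'
    have h3 := this.const_mul √b
    simp only [e3] at h3
    exact h3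
  · have hS := sphS_pos d hd
    have h4 := integral_comp_mul_left_Ioi H 0 hsb
    rw [mul_zero, smul_eq_mul] at h4
    simp only [← e3]
    rw [integral_const_mul, h4, ← mul_assoc, mul_inv_cancel₀ hsb.ne', one_mul]
    refine mul_left_cancel₀ hS.ne' ?_
    rw [← q1, ← q2]
    exact gauss_pairing d D hD hb b hb0

/-! ### Conclusion -/

theorem moment_int (d : ℕ) :
    IntegrableOn (fun s : ℝ => s ^ d * Real.exp (-π ^ 2 * s ^ 2)) (Ioi 0) ∧
    ∫ s in Ioi (0:ℝ), s ^ d * Real.exp (-π ^ 2 * s ^ 2) =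
      (π ^ 2) ^ (-((d : ℝ) + 1) / 2) * (1 / 2) * Real.Gamma (((d : ℝ) + 1) / 2) := by
  have hd : (-1 : ℝ) < d := by linarith [Nat.cast_nonneg (α := ℝ) d]
  have hp : (0:ℝ) < π ^ 2 := by positivity
  have h1 := integrableOn_rpow_mul_exp_neg_mul_sq hp hd
  have h2 := _root_.integral_rpow_mul_exp_neg_mul_rpow (p := 2) (q := d) (b := π ^ 2) two_pos hd hp
  simp only [Real.rpow_natCast, Real.rpow_two] at h1 h2
  exact ⟨h1, h2⟩

theorem rescaled_identity (d : ℕ) (hd : 1 ≤ d) (D : Set (E d)) (hD : MeasurableSet D)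
    (hb : Bornology.IsBounded D) (a b : ℝ) (ha : 0 < a) (hb0 : 0 < b) (R : ℝ) (hR : 0 < R) :
    IntegrableOn (fun s : ℝ => s ^ (d - 1) * ((R * (isoCov D (√a * s / R) - isoCov D 0) -
      R * (isoCov D (√b * s / R) - isoCov D 0)) *
      (π ^ ((d : ℝ) / 2) * Real.exp (-π ^ 2 * s ^ 2)))) (Ioi 0) ∧
    ∫ t in Ioi (0:ℝ), ((R * t) ^ (d + 1) * avgFT D (R * t)) *
      ((Real.exp (-a * t ^ 2) - Real.exp (-b * t ^ 2)) / t ^ 2) =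
    ∫ s in Ioi (0:ℝ), s ^ (d - 1) * ((R * (isoCov D (√a * s / R) - isoCov D 0) -
      R * (isoCov D (√b * s / R) - isoCov D 0)) *
      (π ^ ((d : ℝ) / 2) * Real.exp (-π ^ 2 * s ^ 2))) := by
  obtain ⟨a1, a2, a3⟩ := key_identity d hd D hD hb (a / R ^ 2) (by positivity)
  obtain ⟨b1, b2, b3⟩ := key_identity d hd D hD hb (b / R ^ 2) (by positivity)
  have hsq : ∀ x : ℝ, 0 < x → √(x / R ^ 2) = √x / R := fun x hx => by
    rw [Real.sqrt_div hx.le, Real.sqrt_sq hR.le]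
  rw [hsq a ha] at a2 a3
  rw [hsq b hb0] at b2 b3
  have e : ∀ s : ℝ, s ^ (d - 1) * ((R * (isoCov D (√a * s / R) - isoCov D 0) -
      R * (isoCov D (√b * s / R) - isoCov D 0)) *
      (π ^ ((d : ℝ) / 2) * Real.exp (-π ^ 2 * s ^ 2))) =
      R * (s ^ (d - 1) * (isoCov D (√a / R * s) *
      (π ^ ((d : ℝ) / 2) * Real.exp (-π ^ 2 * s ^ 2))) - s ^ (d - 1) * (isoCov D (√b / R * s) *
      (π ^ ((d : ℝ) / 2) * Real.exp (-π ^ 2 * s ^ 2)))) := by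
    intro s
    rw [div_mul_eq_mul_div, div_mul_eq_mul_div]
    ring
  simp only [e]
  refine ⟨(a2.sub b2).const_mul R, ?_⟩
  rw [integral_const_mul, integral_sub a2 b2, ← a3, ← b3, ← integral_sub a1 b1]
  have h4 := integral_comp_mul_left_Ioi (fun ρ : ℝ =>
    ρ ^ (d - 1) * (avgFT D ρ * Real.exp (-(a / R ^ 2) * ρ ^ 2)) -
    ρ ^ (d - 1) * (avgFT D ρ * Real.exp (-(b / R ^ 2) * ρ ^ 2))) 0 hR
  rw [mul_zero, smul_eq_mul] at h4
  have h5 := congrArg (fun x => R ^ 2 * x) h4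
  rw [← mul_assoc, show R ^ 2 * R⁻¹ = R by field_simp, ← integral_const_mul] at h5
  rw [← h5]
  refine setIntegral_congr_fun measurableSet_Ioi fun t ht => ?_
  have ht : 0 < t := ht
  have x1 : ∀ x : ℝ, -(x / R ^ 2) * (R * t) ^ 2 = -x * t ^ 2 := fun x => by field_simp
  have x2 : (R * t) ^ (d + 1) = R ^ 2 * (R * t) ^ (d - 1) * t ^ 2 := by
    obtain ⟨k, rfl⟩ := Nat.exists_eq_add_of_le' hd
    simp only [Nat.add_sub_cancel]
    ring
  rw [x1, x1, x2]
  field_simp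

theorem isoCov_lip (d : ℕ) (hd : 1 ≤ d) (D : Set (E d)) (hD : MeasurableSet D)
    (hb : Bornology.IsBounded D) (γ' : ℝ)
    (hderiv : Tendsto (fun h : ℝ => (isoCov D h - isoCov D 0) / h) (𝓝[>] (0 : ℝ)) (𝓝 γ')) :
    ∃ M : ℝ, 0 ≤ M ∧ ∀ u : ℝ, 0 < u → |isoCov D u - isoCov D 0| ≤ M * u := by
  have h1 : ∀ᶠ h in 𝓝[>] (0:ℝ), |(isoCov D h - isoCov D 0) / h| < |γ'| + 1 :=
    hderiv.abs.eventually (gt_mem_nhds (by linarith))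
  obtain ⟨δ, hδ, h2⟩ := mem_nhdsGT_iff_exists_Ioo_subset.1 h1
  have hδ : 0 < δ := hδ
  set V := volume.real D
  have hV : 0 ≤ V := measureReal_nonneg
  refine ⟨|γ'| + 1 + 2 * V / δ, by positivity, fun u hu => ?_⟩
  by_cases hu2 : u < δ
  · have h3 : |(isoCov D u - isoCov D 0) / u| < |γ'| + 1 := h2 ⟨hu, hu2⟩
    rw [abs_div, abs_of_pos hu, div_lt_iff₀ hu] at h3
    have : 0 ≤ 2 * V / δ * u := by positivity
    nlinarith
  · push Not at hu2
    have h3 : |isoCov D u - isoCov D 0| ≤ 2 * V := by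
      refine (abs_sub _ _).trans ?_
      linarith [isoCov_bound hd D hD hb u, isoCov_bound hd D hD hb 0]
    have h4 : 2 * V ≤ 2 * V / δ * u := by
      rw [div_mul_eq_mul_div, le_div_iff₀ hδ]
      exact mul_le_mul_of_nonneg_left hu2 (by positivity)
    have : 0 ≤ (|γ'| + 1) * u := by positivity
    nlinarith

theorem isoCov_scaled_lim (d : ℕ) (D : Set (E d)) (γ' : ℝ)
    (hderiv : Tendsto (fun h : ℝ => (isoCov D h - isoCov D 0) / h) (𝓝[>] (0 : ℝ)) (𝓝 γ'))
    (k : ℝ) (hk : 0 < k) :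
    Tendsto (fun R : ℝ => R * (isoCov D (k / R) - isoCov D 0)) atTop (𝓝 (k * γ')) := by
  have h1 : Tendsto (fun R : ℝ => k / R) atTop (𝓝[>] 0) := by
    refine tendsto_nhdsWithin_iff.2 ⟨tendsto_const_nhds.div_atTop tendsto_id, ?_⟩
    filter_upwards [eventually_gt_atTop 0] with R hR
    exact div_pos hk hR
  refine ((hderiv.comp h1).const_mul k).congr' ?_
  filter_upwards [eventually_gt_atTop 0] with R hR
  simp only [Function.comp]
  field_simp

theorem gauss_limit (d : ℕ) (hd : 1 ≤ d) (D : Set (E d)) (hD : MeasurableSet D)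
    (hb : Bornology.IsBounded D) (γ' : ℝ)
    (hderiv : Tendsto (fun h : ℝ => (isoCov D h - isoCov D 0) / h) (𝓝[>] (0 : ℝ)) (𝓝 γ'))
    (a b : ℝ) (ha : 0 < a) (hb0 : 0 < b) :
    Tendsto (fun R : ℝ => ∫ t in Ioi (0:ℝ), ((R * t) ^ (d + 1) * avgFT D (R * t)) *
      ((Real.exp (-a * t ^ 2) - Real.exp (-b * t ^ 2)) / t ^ 2)) atTop
      (𝓝 ((√a - √b) * γ' * π ^ ((d : ℝ) / 2) *
        ((π ^ 2) ^ (-((d : ℝ) + 1) / 2) * (1 / 2) * Real.Gamma (((d : ℝ) + 1) / 2)))) := by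
  obtain ⟨M, hM0, hM⟩ := isoCov_lip d hd D hD hb γ' hderiv
  obtain ⟨m1, m2⟩ := moment_int d
  have hsa : 0 < √a := Real.sqrt_pos.2 ha
  have hsb : 0 < √b := Real.sqrt_pos.2 hb0
  have hpw : ∀ s : ℝ, s ^ d = s ^ (d - 1) * s := fun s => by
    rw [← pow_succ, Nat.sub_add_cancel hd]
  rw [← m2, ← integral_const_mul]
  have key := tendsto_integral_filter_of_dominated_convergence
    (μ := volume.restrict (Ioi (0:ℝ))) (l := (atTop : Filter ℝ))
    (F := fun R s => s ^ (d - 1) * ((R * (isoCov D (√a * s / R) - isoCov D 0) -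
      R * (isoCov D (√b * s / R) - isoCov D 0)) *
      (π ^ ((d : ℝ) / 2) * Real.exp (-π ^ 2 * s ^ 2))))
    (f := fun s => (√a - √b) * γ' * π ^ ((d : ℝ) / 2) * (s ^ d * Real.exp (-π ^ 2 * s ^ 2)))
    (fun s => (M * (√a + √b) * π ^ ((d : ℝ) / 2)) * (s ^ d * Real.exp (-π ^ 2 * s ^ 2)))
    ?_ ?_ (m1.const_mul _) ?_
  · refine key.congr' ?_
    filter_upwards [eventually_gt_atTop 0] with R hR
    exact (rescaled_identity d hd D hD hb a b ha hb0 R hR).2.symm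
  · filter_upwards [eventually_gt_atTop 0] with R hR
    exact (rescaled_identity d hd D hD hb a b ha hb0 R hR).1.aestronglyMeasurable
  · filter_upwards [eventually_gt_atTop 0] with R hR
    filter_upwards [ae_restrict_mem measurableSet_Ioi] with s hs
    have hs : 0 < s := hs
    have hbd : ∀ k : ℝ, 0 < k → |R * (isoCov D (k * s / R) - isoCov D 0)| ≤ M * k * s := by
      intro k hk
      rw [abs_mul, abs_of_pos hR]
      calc _ ≤ R * (M * (k * s / R)) :=
            mul_le_mul_of_nonneg_left (hM _ (by positivity)) hR.le
        _ = _ := by field_simp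
    rw [norm_mul, norm_mul, Real.norm_of_nonneg (by positivity : (0:ℝ) ≤ s ^ (d - 1)),
      Real.norm_of_nonneg (by positivity : 0 ≤ π ^ ((d : ℝ) / 2) * Real.exp (-π ^ 2 * s ^ 2))]
    have h3 : ‖R * (isoCov D (√a * s / R) - isoCov D 0) -
        R * (isoCov D (√b * s / R) - isoCov D 0)‖ ≤ M * (√a + √b) * s := by
      rw [Real.norm_eq_abs]
      refine (abs_sub _ _).trans ?_
      linarith [hbd _ hsa, hbd _ hsb]
    calc _ ≤ s ^ (d - 1) * ((M * (√a + √b) * s) *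
          (π ^ ((d : ℝ) / 2) * Real.exp (-π ^ 2 * s ^ 2))) := by gcongr
      _ = _ := by rw [hpw]; ring
  · filter_upwards [ae_restrict_mem measurableSet_Ioi] with s hs
    have hs : 0 < s := hs
    have l1 := isoCov_scaled_lim d D γ' hderiv (√a * s) (by positivity)
    have l2 := isoCov_scaled_lim d D γ' hderiv (√b * s) (by positivity)
    have l3 := ((l1.sub l2).mul_const (π ^ ((d : ℝ) / 2) * Real.exp (-π ^ 2 * s ^ 2))).const_mul
      (s ^ (d - 1))
    convert l3 using 2
    rw [hpw]; ring

theorem const_identity (d : ℕ) (hd : 1 ≤ d) (γ' : ℝ) :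
    2 * π ^ 2 * unitBallVol (d - 1) * (-γ' * π ^ ((d : ℝ) / 2) *
      ((π ^ 2) ^ (-((d : ℝ) + 1) / 2) * (1 / 2) * Real.Gamma (((d : ℝ) + 1) / 2)) / √π) = -γ' := by
  unfold unitBallVol
  have hcast : ((d - 1 : ℕ) : ℝ) = d - 1 := by push_cast [Nat.cast_sub hd]; ring
  rw [hcast, show ((d : ℝ) - 1) / 2 + 1 = ((d : ℝ) + 1) / 2 by ring]
  have hG : Real.Gamma (((d : ℝ) + 1) / 2) ≠ 0 := (Real.Gamma_pos_of_pos (by positivity)).ne'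
  have hpi := Real.pi_pos
  have h1 : (π ^ 2 : ℝ) ^ (-((d : ℝ) + 1) / 2) = π ^ (-((d : ℝ) + 1)) := by
    rw [← Real.rpow_natCast, ← Real.rpow_mul hpi.le]
    congr 1; push_cast; ring
  have h2 : π ^ (2:ℝ) * π ^ (((d : ℝ) - 1) / 2) * π ^ ((d : ℝ) / 2) * π ^ (-((d : ℝ) + 1))
      = √π := by
    rw [← Real.rpow_add hpi, ← Real.rpow_add hpi, ← Real.rpow_add hpi, Real.sqrt_eq_rpow]
    congr 1; ring
  rw [Real.rpow_two] at h2
  have hs : √π ≠ 0 := (Real.sqrt_pos.2 hpi).ne'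
  rw [h1]
  field_simp
  rw [← h2]
  ring

/-- if `γ̄_D'⁺(0)` exists (finitely) and `ρ^{d+1} γ̄̂_D(ρ)` is bounded on `(0,∞)`,
then the Cesàro averages of `2π² κ_{d−1} ρ^{d+1} γ̄̂_D(ρ)` converge to `−γ̄_D'⁺(0)`. -/
theorem cesaro_avgFT_tendsto (d : ℕ) (hd : 1 ≤ d) (D : Set (E d))
    (hDmeas : MeasurableSet D) (hDbdd : Bornology.IsBounded D) (γ' : ℝ)
    (hderiv : Tendsto (fun h : ℝ => (isoCov D h - isoCov D 0) / h) (𝓝[>] (0 : ℝ)) (𝓝 γ'))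
    (hbdd : ∃ C : ℝ, ∀ ρ : ℝ, 0 < ρ → |ρ ^ (d + 1) * avgFT D ρ| ≤ C) :
    Tendsto (fun R : ℝ =>
        R⁻¹ * ∫ ρ in Set.Ioc (0 : ℝ) R,
          2 * Real.pi ^ 2 * unitBallVol (d - 1) * ρ ^ (d + 1) * avgFT D ρ)
      atTop (𝓝 (-γ')) := by
  obtain ⟨C, hC⟩ := hbdd
  have hF : Measurable (fun ρ : ℝ => ρ ^ (d + 1) * avgFT D ρ) := by
    have := avgFT_cont hd D hDmeas hDbdd
    exact Continuous.measurable (by fun_prop)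
  have main := tb_main (fun ρ => ρ ^ (d + 1) * avgFT D ρ) hF C hC
    (-γ' * π ^ ((d : ℝ) / 2) *
      ((π ^ 2) ^ (-((d : ℝ) + 1) / 2) * (1 / 2) * Real.Gamma (((d : ℝ) + 1) / 2)) / √π) (by
    intro a b ha hab
    have h := gauss_limit d hd D hDmeas hDbdd γ' hderiv a b ha (ha.trans hab)
    convert h using 2
    have hs : √π ≠ 0 := (Real.sqrt_pos.2 Real.pi_pos).ne'
    field_simp
    ring)
  have h2 := main.const_mul (2 * π ^ 2 * unitBallVol (d - 1))
  rw [const_identity d hd γ'] at h2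
  refine h2.congr fun R => ?_
  rw [mul_left_comm, ← integral_const_mul]
  congr 2
  ext ρ
  ring

end
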